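/- Let M = ⟨S, A, T, s0⟩ be an nrMDP, λ a labeling function, and R, H two Mealy reward machines over the same observations Z and labeling λ. Let π : S × U^H → A ∪ {↻} be a memoryless strategy for the homing synchronized product M ⊗↻_λ H and let v ∈ ℝ be such that for every state (s, u) ∈ S × U^H, almost every trajectory of the Markov chain induced by π on M ⊗↻_λ H started at (s, u) has mean payoff (the limit of the Cesàro averages of the collected rewards exists and) equal to v. Lift π to the monitored homing product M ⊗↻_λ R,H by π̂(⟨s, u_R, u_H⟩) = π(s, u_H) (arbitrary at CE). Then, under the trajectory measure of the Markov chain induced by π̂ on the monitored homing product started at ⟨s0, u0^R, u0^H⟩, almost every trajectory either eventually visits CE or has mean payoff of the rewards collected from R equal to v. -/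

import Mathlib

/-! The homing chain and the monitored chain can be driven by one and the same noise: at each time,
sample independently a successor in `M` for every state-action pair. The orbits of the two resulting
random recursions have the trajectory laws of the two chains (`isChainMeasure_map_orbit`, with
`homStep_law` and `monStep_law`), which also settles the existence of the homing trajectory measure,
without which the hypothesis on `π` would say nothing. A trajectory measure is determined by its
values on cylinders (`IsChainMeasure.unique`), so the given measure on the monitored product is the
law of the monitored orbit.

Noise by noise, as long as the monitored orbit avoids `CE`, the two machines have agreed on every
reward and the monitored orbit is the homing orbit together with a node of `R`
(`orbit_monStep`, `monRew_orbit`). Hence the two reward sequences coincide, and the mean payoff of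
the homing orbit, almost surely `v`, is that of the monitored orbit. -/

open MeasureTheory Filter

attribute [local instance] Classical.propDecidable

/-- A non-rewarding Markov decision process over finite state set `S` and
finite action set `A`. -/
structure NRMDP (S A : Type) [Fintype S] [Fintype A] where
  T : S → A → S → ℝ
  T_nonneg : ∀ s a s', 0 ≤ T s a s'
  T_le_one : ∀ s a s', T s a s' ≤ 1
  T_sum_one : ∀ s a, ∑ s', T s a s' = 1
  s0 : S

/-- A Mealy reward machine over the finite observation set `Z` with
distinguished observation `null`. -/
structure MRM (U Z : Type) [Fintype U] [Fintype Z] (null : Z) where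
  u0 : U
  δu : U → Z → U
  δr : U → Z → ℝ
  c : ℝ
  δu_null : ∀ u, δu u null = u
  δr_null : ∀ u, δr u null = c

variable {S A U Z St Ac : Type}

/-- `ValidFrom T s steps` : the alternating sequence starting at `s` whose
successive (action, next-state) steps are `steps` has positive transition
probability at every step. -/
def ValidFrom (T : St → Ac → St → ℝ) : St → List (Ac × St) → Prop
  | _, [] => True
  | s, step :: rest => 0 < T s step.1 step.2 ∧ ValidFrom T step.2 rest

/-- Transition function of the synchronized product `M ⊗_λ R`. -/
noncomputable def prodT (T : S → A → S → ℝ) (lab : A → S → Z) (δu : U → Z → U) :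
    S × U → A → S × U → ℝ :=
  fun p a q => if q.2 = δu p.2 (lab a q.1) then T p.1 a q.1 else 0

/-- The map `B` (on the step list of a history), lifting a history of `M`
to a history of the synchronized product by tracking the MRM node. -/
def liftHist (lab : A → S → Z) (δu : U → Z → U) : U → List (A × S) → List (A × (S × U))
  | _, [] => []
  | u, (a, s') :: rest =>
      (a, (s', δu u (lab a s'))) :: liftHist lab δu (δu u (lab a s')) rest

variable {UR UH : Type}

/-- Transition function of the monitored homing product `M ⊗↻_λ R,H`.
States are `Option (S × UR × UH)` with `none` playing the role of the
counter-example state `CE`; actions are `A ⊕ Unit` with `Sum.inr ()`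
playing the role of the reset action `↻`. -/
noncomputable def monT [Fintype S] [Fintype UR] [Fintype UH] [Fintype Z] {null : Z}
    (T : S → A → S → ℝ) (lab : A → S → Z)
    (R : MRM UR Z null) (H : MRM UH Z null) (s0 : S) :
    Option (S × UR × UH) → A ⊕ Unit → Option (S × UR × UH) → ℝ
  | none, _, none => 1
  | none, _, some _ => 0
  | some x, Sum.inl a, some y =>
      if R.δr x.2.1 (lab a y.1) = H.δr x.2.2 (lab a y.1) ∧
         y.2.1 = R.δu x.2.1 (lab a y.1) ∧ y.2.2 = H.δu x.2.2 (lab a y.1)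
      then T x.1 a y.1 else 0
  | some x, Sum.inl a, none =>
      ∑ s' : S, if R.δr x.2.1 (lab a s') ≠ H.δr x.2.2 (lab a s') then T x.1 a s' else 0
  | some _, Sum.inr _, some y => if y = (s0, R.u0, H.u0) then 1 else 0
  | some _, Sum.inr _, none => 0

/-- Every trajectory space `ℕ → X` over a (finite) state space `X` carries
the product of the discrete σ-algebras. -/
instance trajMeasurableSpace (X : Type) : MeasurableSpace (ℕ → X) :=
  @MeasurableSpace.pi ℕ (fun _ => X) (fun _ => ⊤)

/-- The cylinder of infinite trajectories extending the finite prefix `pre`. -/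
def Cyl {X : Type} (pre : List X) : Set (ℕ → X) :=
  {ω | ∀ i : ℕ, i < pre.length → pre[i]? = some (ω i)}

/-- Probability of traversing the finite state sequence `l` starting from
`x` in the Markov chain with transition matrix `P`. -/
noncomputable def chainFrom {X : Type} (P : X → X → ℝ) : X → List X → ℝ
  | _, [] => 1
  | x, y :: rest => P x y * chainFrom P y rest

/-- Probability of the finite trajectory prefix `pre` (including time 0) in
the Markov chain with transition matrix `P` started at `start`. -/
noncomputable def chainPrefixProb {X : Type} (P : X → X → ℝ) (start : X) :
    List X → ℝ
  | [] => 1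
  | y :: rest => if y = start then chainFrom P y rest else 0

/-- `IsChainMeasure P start μ` : `μ` is the trajectory probability measure
(given by the Ionescu–Tulcea theorem) of the Markov chain with transition
matrix `P` started at `start`, characterized by its values on cylinders. -/
def IsChainMeasure {X : Type} (P : X → X → ℝ) (start : X)
    (μ : MeasureTheory.Measure (ℕ → X)) : Prop :=
  MeasureTheory.IsProbabilityMeasure μ ∧
    ∀ pre : List X, μ (Cyl pre) = ENNReal.ofReal (chainPrefixProb P start pre)

/-- Transition function of the homing synchronized product `M ⊗↻_λ H`. -/
noncomputable def homT (T : S → A → S → ℝ) (lab : A → S → Z) (δu : U → Z → U)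
    (s0 : S) (u0 : U) : S × U → A ⊕ Unit → S × U → ℝ
  | p, Sum.inl a, q => if q.2 = δu p.2 (lab a q.1) then T p.1 a q.1 else 0
  | _, Sum.inr _, q => if q = (s0, u0) then 1 else 0

/-- Reward collected on a transition of the homing product `M ⊗↻_λ H`
under the memoryless strategy `π`. -/
noncomputable def homRew [Fintype UH] [Fintype Z] {null : Z}
    (lab : A → S → Z) (H : MRM UH Z null) (creset : ℝ)
    (π : S × UH → A ⊕ Unit) (x y : S × UH) : ℝ :=
  match π x with
  | Sum.inl a => H.δr x.2 (lab a y.1)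
  | Sum.inr _ => creset

/-- Reward (of `R`) collected on a transition of the monitored homing
product under the memoryless strategy `πhat`. -/
noncomputable def monRew [Fintype UR] [Fintype Z] {null : Z} {UH : Type}
    (lab : A → S → Z) (R : MRM UR Z null) (creset : ℝ)
    (πhat : Option (S × UR × UH) → A ⊕ Unit) :
    Option (S × UR × UH) → Option (S × UR × UH) → ℝ
  | none, _ => 0
  | some x, y =>
      match πhat (some x), y with
      | Sum.inl a, some y' => R.δr x.2.1 (lab a y'.1)
      | Sum.inl _, none => 0
      | Sum.inr _, _ => creset

/-! ### Uniqueness of the trajectory measure -/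

lemma isPiSystem_cyl (X : Type) : IsPiSystem (Set.range (Cyl : List X → Set (ℕ → X))) := by
  have key : ∀ (p q : List X) (ω₀ : ℕ → X), ω₀ ∈ Cyl p → ω₀ ∈ Cyl q → p.length ≤ q.length →
      Cyl q ⊆ Cyl p := by
    intro p q ω₀ hp hq hle ω hω i hi
    have h1 := hq i (by omega)
    rw [hω i (by omega)] at h1
    rw [hp i hi, ← h1]
  rintro _ ⟨p, rfl⟩ _ ⟨q, rfl⟩ ⟨ω₀, hp, hq⟩
  rcases le_total p.length q.length with h | h
  · exact ⟨q, (Set.inter_eq_right.2 (key p q ω₀ hp hq h)).symm⟩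
  · exact ⟨p, (Set.inter_eq_left.2 (key q p ω₀ hq hp h)).symm⟩

lemma measurable_eval_top (X : Type) (n : ℕ) (B : Set X) :
    MeasurableSet {ω : ℕ → X | ω n ∈ B} := by
  let _ : MeasurableSpace X := ⊤
  exact (measurable_pi_apply (X := fun _ : ℕ => X) n) (MeasurableSpace.measurableSet_top (s := B))

lemma measurableSet_cyl {X : Type} (pre : List X) : MeasurableSet (Cyl pre) := by
  have : Cyl pre = ⋂ i : ℕ, {ω : ℕ → X | ω i ∈ {x | i < pre.length → pre[i]? = some x}} := by
    ext ω; simp [Cyl]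
  rw [this]
  exact MeasurableSet.iInter fun i => measurable_eval_top X i _

/-- The σ-algebra on trajectories over a countable state space is generated by the cylinders. -/
lemma generateFrom_cyl (X : Type) [Countable X] :
    trajMeasurableSpace X = MeasurableSpace.generateFrom (Set.range (Cyl : List X → _)) := by
  apply le_antisymm
  · refine iSup_le fun n => ?_
    rintro _ ⟨B, -, rfl⟩
    have : (fun ω : ℕ → X => ω n) ⁻¹' B =
        ⋃ p ∈ {p : List X | n < p.length ∧ ∃ x ∈ B, p[n]? = some x}, Cyl p := by
      ext ω
      simp only [Set.mem_preimage, Set.mem_iUnion, Set.mem_ofPred_eq, exists_prop]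
      constructor
      · intro h
        refine ⟨List.ofFn fun i : Fin (n + 1) => ω i, ⟨by simp, ω n, h, by simp [-List.ofFn_succ]⟩, ?_⟩
        intro i hi
        have : i < n + 1 := by simpa using hi
        simp [this, -List.ofFn_succ]
      · rintro ⟨p, ⟨hn, x, hx, hpx⟩, hω⟩
        have := hω n hn
        rw [hpx] at this
        exact Option.some.inj this ▸ hx
    change MeasurableSet[MeasurableSpace.generateFrom _] ((fun ω : ℕ → X => ω n) ⁻¹' B)
    rw [this]
    exact MeasurableSet.biUnion (Set.to_countable _) fun p _ =>
      MeasurableSpace.measurableSet_generateFrom ⟨p, rfl⟩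
  · apply MeasurableSpace.generateFrom_le
    rintro _ ⟨p, rfl⟩
    exact measurableSet_cyl p

lemma IsChainMeasure.unique {X : Type} [Countable X] {P : X → X → ℝ} {x : X}
    {μ ν : Measure (ℕ → X)} (hμ : IsChainMeasure P x μ) (hν : IsChainMeasure P x ν) : μ = ν := by
  have := hμ.1
  have := hν.1
  refine ext_of_generate_finite _ (generateFrom_cyl X) (isPiSystem_cyl X) ?_ (by simp)
  rintro _ ⟨p, rfl⟩
  rw [hμ.2, hν.2]

/-! ### Chains driven by independent identically distributed noise -/

/-- The law of an i.i.d. sequence with common law `m`, on the trajectory space `ℕ → G`. -/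
noncomputable def iidLaw {G : Type} (m : PMF G) : Measure (ℕ → G) :=
  let _ : MeasurableSpace G := ⊤
  Measure.infinitePi fun _ : ℕ => m.toMeasure

instance {G : Type} (m : PMF G) : IsProbabilityMeasure (iidLaw m) := by
  let _ : MeasurableSpace G := ⊤
  unfold iidLaw
  infer_instance

lemma iidLaw_box {G : Type} (m : PMF G) (n : ℕ) (B : ℕ → Set G) :
    iidLaw m {ω | ∀ i < n, ω i ∈ B i} = ∏ i ∈ Finset.range n, m.toOuterMeasure (B i) := by
  let _ : MeasurableSpace G := ⊤
  have h := Measure.infinitePi_pi (μ := fun _ : ℕ => m.toMeasure) (s := Finset.range n) (t := B)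
    (fun i _ => MeasurableSpace.measurableSet_top)
  have e : {ω : ℕ → G | ∀ i < n, ω i ∈ B i} = Set.pi (↑(Finset.range n)) B := by
    ext ω; simp [Set.mem_pi]
  rw [e]
  refine h.trans (Finset.prod_congr rfl fun i _ => ?_)
  exact PMF.toMeasure_apply_eq_toOuterMeasure_apply _ MeasurableSpace.measurableSet_top

/-- The trajectory from `x` of the recursion `x_{n+1} = step x_n ω_n` driven by the noise `ω`. -/
def orbit {X G : Type} (step : X → G → X) (x : X) (ω : ℕ → G) : ℕ → X
  | 0 => x
  | n + 1 => step (orbit step x ω n) (ω n)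

lemma measurable_orbit {X G : Type} [Finite G] (step : X → G → X) (x : X) :
    Measurable (orbit step x) := by
  let _ : MeasurableSpace X := ⊤
  let _ : MeasurableSpace G := ⊤
  refine measurable_pi_iff.2 fun n => ?_
  -- the orbit up to time `n` is a function of the finitely-valued vector of the first `n` noises
  have h : ∃ f : (Fin n → G) → X, ∀ ω : ℕ → G, orbit step x ω n = f fun i => ω i := by
    induction n with
    | zero => exact ⟨fun _ => x, fun _ => rfl⟩
    | succ n ih =>
      obtain ⟨f, hf⟩ := ih
      exact ⟨fun g => step (f fun i => g i.castSucc) (g (Fin.last n)), fun ω => by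
        simp [orbit, hf]⟩
  obtain ⟨f, hf⟩ := h
  simp only [hf]
  exact (measurable_of_countable f).comp
    (measurable_pi_iff.2 fun i => measurable_pi_apply (X := fun _ : ℕ => G) _)

lemma chainFrom_eq_prod {X : Type} (P : X → X → ℝ) (d x : X) (l : List X) :
    chainFrom P x l =
      ∏ i ∈ Finset.range l.length, P ((x :: l).getD i d) ((x :: l).getD (i + 1) d) := by
  induction l generalizing x with
  | nil => simp [chainFrom]
  | cons y l ih =>
    rw [chainFrom, ih, List.length_cons, Finset.prod_range_succ', mul_comm]
    simp

lemma orbit_mem_cyl {X G : Type} (step : X → G → X) (x : X) (l : List X) (ω : ℕ → G) :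
    orbit step x ω ∈ Cyl (x :: l) ↔
      ∀ i < l.length, step ((x :: l).getD i x) (ω i) = (x :: l).getD (i + 1) x := by
  have e : ∀ i, i < (x :: l).length → (x :: l)[i]? = some ((x :: l).getD i x) := by
    intro i hi
    simp [List.getD, List.getElem?_eq_getElem hi]
  constructor
  · intro h i hi
    have h1 := h i (by simp; omega)
    have h2 := h (i + 1) (by simp; omega)
    rw [e _ (by simp; omega)] at h1 h2
    rw [Option.some.inj h1, Option.some.inj h2, orbit]
  · intro h i hi
    rw [e i hi]
    congr 1
    induction i with
    | zero => simp [orbit]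
    | succ i ih =>
      rw [orbit, ← ih (by omega), h i (by simpa using hi)]

/-- A random map whose one-step law from `y` is `P y` drives, when iterated independently, the
Markov chain with transition matrix `P`. -/
lemma isChainMeasure_map_orbit {X G : Type} [Finite G] (m : PMF G) (step : X → G → X)
    (P : X → X → ℝ) (hP : ∀ x y, 0 ≤ P x y)
    (hstep : ∀ x y, m.toOuterMeasure {g | step x g = y} = ENNReal.ofReal (P x y)) (x : X) :
    IsChainMeasure P x ((iidLaw m).map (orbit step x)) := by
  have hm := measurable_orbit step x
  refine ⟨Measure.isProbabilityMeasure_map hm.aemeasurable, fun pre => ?_⟩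
  rw [Measure.map_apply hm (measurableSet_cyl pre)]
  cases pre with
  | nil => simp [Cyl, chainPrefixProb]
  | cons y l =>
    rw [chainPrefixProb]
    split_ifs with hy
    · subst hy
      have e : orbit step y ⁻¹' Cyl (y :: l) = {ω | ∀ i < l.length, ω i ∈
          {g | step ((y :: l).getD i y) g = (y :: l).getD (i + 1) y}} := by
        ext ω; exact orbit_mem_cyl step y l ω
      rw [e, iidLaw_box, chainFrom_eq_prod P y, ENNReal.ofReal_prod_of_nonneg fun _ _ => hP _ _]
      exact Finset.prod_congr rfl fun i _ => hstep _ _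
    · have e : orbit step x ⁻¹' Cyl (y :: l) = ∅ := by
        ext ω
        simp only [Set.mem_preimage, Set.mem_empty_iff_false, iff_false]
        intro h
        have := h 0 (by simp)
        simp [orbit] at this
        exact hy this
      simp [e]

/-- Independent sampling of a successor for every state-action pair. -/
lemma exists_noise [Fintype S] [Fintype A] (M : NRMDP S A) :
    ∃ m : PMF (S × A → S), ∀ (s : S) (a : A) (B : Set S),
      m.toOuterMeasure {g | g (s, a) ∈ B} =
        ENNReal.ofReal (∑ s', if s' ∈ B then M.T s a s' else 0) := by
  have h1 : ∀ q : S × A, ∑ s', ENNReal.ofReal (M.T q.1 q.2 s') = 1 := fun q => by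
    rw [← ENNReal.ofReal_sum_of_nonneg fun _ _ => M.T_nonneg _ _ _, M.T_sum_one]; simp
  refine ⟨PMF.ofFintype (fun g => ∏ q : S × A, ENNReal.ofReal (M.T q.1 q.2 (g q))) ?_, ?_⟩
  · rw [← Fintype.prod_sum (fun (q : S × A) s' => ENNReal.ofReal (M.T q.1 q.2 s'))]
    simp [h1]
  · intro s a B
    -- weighting the factor at `(s, a)` by the indicator of `B` lets the sum factor over pairs
    let f : S × A → S → ENNReal := fun q s' =>
      if q = (s, a) → s' ∈ B then ENNReal.ofReal (M.T q.1 q.2 s') else 0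
    have hf : ∀ g : S × A → S, {g : S × A → S | g (s, a) ∈ B}.indicator
        (fun g => ∏ q : S × A, ENNReal.ofReal (M.T q.1 q.2 (g q))) g = ∏ q, f q (g q) := by
      intro g
      by_cases hg : g (s, a) ∈ B
      · rw [Set.indicator_of_mem (by exact hg)]
        refine Finset.prod_congr rfl fun q _ => (if_pos ?_).symm
        rintro rfl; exact hg
      · rw [Set.indicator_of_notMem (by exact hg)]
        refine (Finset.prod_eq_zero (Finset.mem_univ (s, a)) (if_neg ?_)).symm
        simpa using hg
    rw [PMF.toOuterMeasure_apply_fintype]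
    change ∑ g, {g : S × A → S | g (s, a) ∈ B}.indicator
        (fun g => ∏ q : S × A, ENNReal.ofReal (M.T q.1 q.2 (g q))) g = _
    simp_rw [hf]
    rw [← Fintype.prod_sum f, Fintype.prod_eq_single (s, a)]
    · rw [ENNReal.ofReal_sum_of_nonneg]
      · refine Finset.sum_congr rfl fun s' _ => ?_
        by_cases h : s' ∈ B <;> simp [f, h]
      · intro s' _
        split_ifs
        exacts [M.T_nonneg _ _ _, le_rfl]
    · intro q hq
      simp [f, hq, h1]

/-! ### The two products driven by the same noise -/

/-- One step of the homing product under `π`, with `g` sampling the successor in `M`. -/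
def homStep (lab : A → S → Z) (δu : U → Z → U) (s0 : S) (u0 : U) (π : S × U → A ⊕ Unit)
    (x : S × U) (g : S × A → S) : S × U :=
  match π x with
  | Sum.inl a => (g (x.1, a), δu x.2 (lab a (g (x.1, a))))
  | Sum.inr _ => (s0, u0)

/-- One step of the monitored product under the lift of `π`, with `g` sampling the successor
in `M`. -/
noncomputable def monStep [Fintype UR] [Fintype UH] [Fintype Z] {null : Z} (lab : A → S → Z)
    (R : MRM UR Z null) (H : MRM UH Z null) (s0 : S) (π : S × UH → A ⊕ Unit) :
    Option (S × UR × UH) → (S × A → S) → Option (S × UR × UH)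
  | none, _ => none
  | some x, g =>
    match π (x.1, x.2.2) with
    | Sum.inl a =>
      if R.δr x.2.1 (lab a (g (x.1, a))) = H.δr x.2.2 (lab a (g (x.1, a))) then
        some (g (x.1, a), R.δu x.2.1 (lab a (g (x.1, a))), H.δu x.2.2 (lab a (g (x.1, a))))
      else none
    | Sum.inr _ => some (s0, R.u0, H.u0)

lemma toOuterMeasure_const {G : Type} (m : PMF G) (p : Prop) :
    m.toOuterMeasure {_g | p} = if p then 1 else 0 := by
  by_cases h : p
  · simp only [h, Set.ofPred_true, if_true]
    exact (m.toOuterMeasure_apply_eq_one_iff _).2 (Set.subset_univ _)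
  · simp [h]

lemma homStep_law [Fintype S] [Fintype A] (M : NRMDP S A) (m : PMF (S × A → S))
    (hm : ∀ (s : S) (a : A) (B : Set S), m.toOuterMeasure {g | g (s, a) ∈ B} =
        ENNReal.ofReal (∑ s', if s' ∈ B then M.T s a s' else 0))
    (lab : A → S → Z) (δu : U → Z → U) (u0 : U) (π : S × U → A ⊕ Unit) (x y : S × U) :
    m.toOuterMeasure {g | homStep lab δu M.s0 u0 π x g = y} =
      ENNReal.ofReal (homT M.T lab δu M.s0 u0 x (π x) y) := by
  unfold homStep homT
  cases π x with
  | inl a =>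
    refine (hm x.1 a {s' | (s', δu x.2 (lab a s')) = y}).trans (congrArg _ ?_)
    rw [Fintype.sum_eq_single y.1]
    · simp [Prod.ext_iff, eq_comm]
    · intro s' hs'
      simp [Prod.ext_iff, hs']
  | inr _ =>
    refine (toOuterMeasure_const m ((M.s0, u0) = y)).trans ?_
    simp only [eq_comm (a := y)]
    split_ifs <;> simp

/-- A form of `if_congr` whose decidability instances are found by unification. -/
lemma ite_eq_of_iff {p q : Prop} {_ : Decidable p} {_ : Decidable q} (h : p ↔ q) (r : ℝ) :
    (if p then r else 0) = if q then r else 0 :=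
  if_congr h rfl rfl

lemma monStep_law [Fintype S] [Fintype A] [Fintype UR] [Fintype UH] [Fintype Z] {null : Z}
    (M : NRMDP S A) (m : PMF (S × A → S))
    (hm : ∀ (s : S) (a : A) (B : Set S), m.toOuterMeasure {g | g (s, a) ∈ B} =
        ENNReal.ofReal (∑ s', if s' ∈ B then M.T s a s' else 0))
    (lab : A → S → Z) (R : MRM UR Z null) (H : MRM UH Z null) (π : S × UH → A ⊕ Unit)
    (πhat : Option (S × UR × UH) → A ⊕ Unit)
    (hπhat : ∀ (s : S) (uR : UR) (uH : UH), πhat (some (s, uR, uH)) = π (s, uH))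
    (x y : Option (S × UR × UH)) :
    m.toOuterMeasure {g | monStep lab R H M.s0 π x g = y} =
      ENNReal.ofReal (monT M.T lab R H M.s0 x (πhat x) y) := by
  rcases x with _ | ⟨s, uR, uH⟩
  · refine (toOuterMeasure_const m (none = y)).trans ?_
    cases y <;> simp [monT]
  · rw [hπhat]
    unfold monStep
    dsimp only
    cases π (s, uH) with
    | inl a =>
      refine (hm s a {s' | (if R.δr uR (lab a s') = H.δr uH (lab a s') then
        some (s', R.δu uR (lab a s'), H.δu uH (lab a s')) else none) = y}).trans
          (congrArg _ ?_)
      rcases y with _ | ⟨s', vR, vH⟩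
      · simp [monT]
      · rw [Fintype.sum_eq_single s']
        · simp only [monT]
          refine ite_eq_of_iff ?_ _
          rw [Set.mem_ofPred_eq]
          split_ifs with h <;> simp [h, eq_comm]
        · intro t ht
          refine if_neg ?_
          simp only [Set.mem_ofPred_eq]
          split_ifs <;> simp [ht]
    | inr _ =>
      refine (toOuterMeasure_const m (some (M.s0, R.u0, H.u0) = y)).trans ?_
      rcases y with _ | y
      · simp [monT]
      · simp only [monT, Option.some.injEq, eq_comm (a := y)]
        split_ifs <;> simp

lemma homT_nonneg [Fintype S] [Fintype A] (M : NRMDP S A) (lab : A → S → Z) (δu : U → Z → U)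
    (u0 : U) (x : S × U) (a : A ⊕ Unit) (y : S × U) : 0 ≤ homT M.T lab δu M.s0 u0 x a y := by
  rcases a with a | _ <;> simp only [homT] <;> split_ifs <;> simp [M.T_nonneg]

lemma monT_nonneg [Fintype S] [Fintype A] [Fintype UR] [Fintype UH] [Fintype Z] {null : Z}
    (M : NRMDP S A) (lab : A → S → Z) (R : MRM UR Z null) (H : MRM UH Z null)
    (x : Option (S × UR × UH)) (a : A ⊕ Unit) (y : Option (S × UR × UH)) :
    0 ≤ monT M.T lab R H M.s0 x a y := by
  rcases x with _ | x <;> rcases a with a | _ <;> rcases y with _ | y <;> simp only [monT] <;>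
    first
      | exact Finset.sum_nonneg fun _ _ => by split_ifs <;> simp [M.T_nonneg]
      | split_ifs <;> simp [M.T_nonneg]
      | simp

/-- As long as the monitored orbit avoids `CE`, its `S` and `H` components are the homing orbit
driven by the same noise. -/
lemma orbit_monStep [Fintype UR] [Fintype UH] [Fintype Z] {null : Z} (lab : A → S → Z)
    (R : MRM UR Z null) (H : MRM UH Z null) (s0 : S) (π : S × UH → A ⊕ Unit) (ω : ℕ → S × A → S)
    (hne : ∀ n, orbit (monStep lab R H s0 π) (some (s0, R.u0, H.u0)) ω n ≠ none) (n : ℕ) :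
    ∃ uR, orbit (monStep lab R H s0 π) (some (s0, R.u0, H.u0)) ω n =
      some ((orbit (homStep lab H.δu s0 H.u0 π) (s0, H.u0) ω n).1, uR,
        (orbit (homStep lab H.δu s0 H.u0 π) (s0, H.u0) ω n).2) := by
  induction n with
  | zero => exact ⟨R.u0, rfl⟩
  | succ n ih =>
    obtain ⟨uR, h⟩ := ih
    have h1 := hne (n + 1)
    simp only [orbit, h] at h1 ⊢
    generalize orbit (homStep lab H.δu s0 H.u0 π) (s0, H.u0) ω n = x at h1 ⊢
    unfold monStep homStep at *
    dsimp only at *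
    cases hx : π x with
    | inl a =>
      rw [hx] at h1
      dsimp only at *
      split_ifs at h1 ⊢ with h2
      · exact ⟨_, rfl⟩
      · exact absurd rfl h1
    | inr _ => exact ⟨_, rfl⟩

lemma monRew_orbit [Fintype UR] [Fintype UH] [Fintype Z] {null : Z} (lab : A → S → Z)
    (R : MRM UR Z null) (H : MRM UH Z null) (s0 : S) (creset : ℝ) (π : S × UH → A ⊕ Unit)
    (πhat : Option (S × UR × UH) → A ⊕ Unit)
    (hπhat : ∀ (s : S) (uR : UR) (uH : UH), πhat (some (s, uR, uH)) = π (s, uH))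
    (ω : ℕ → S × A → S)
    (hne : ∀ n, orbit (monStep lab R H s0 π) (some (s0, R.u0, H.u0)) ω n ≠ none) (n : ℕ) :
    monRew lab R creset πhat (orbit (monStep lab R H s0 π) (some (s0, R.u0, H.u0)) ω n)
        (orbit (monStep lab R H s0 π) (some (s0, R.u0, H.u0)) ω (n + 1)) =
      homRew lab H creset π (orbit (homStep lab H.δu s0 H.u0 π) (s0, H.u0) ω n)
        (orbit (homStep lab H.δu s0 H.u0 π) (s0, H.u0) ω (n + 1)) := by
  obtain ⟨uR, h⟩ := orbit_monStep lab R H s0 π ω hne n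
  have h1 := hne (n + 1)
  simp only [orbit, h] at h1 ⊢
  generalize orbit (homStep lab H.δu s0 H.u0 π) (s0, H.u0) ω n = x at h1 ⊢
  unfold monRew homRew
  unfold monStep homStep at *
  dsimp only at *
  rw [hπhat]
  cases hx : π x with
  | inl a =>
    rw [hx] at h1
    dsimp only at *
    split_ifs at h1 ⊢ with h2
    · exact h2
    · exact absurd rfl h1
  | inr _ => rfl

lemma measurableSet_meanPayoff {X : Type} [Finite X] (r : X → X → ℝ) (v : ℝ) :
    MeasurableSet {ω : ℕ → X | Tendsto
      (fun k : ℕ => (∑ i ∈ Finset.range k, r (ω i) (ω (i + 1))) / k) atTop (nhds v)} := by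
  let _ : MeasurableSpace X := ⊤
  refine measurableSet_tendsto _ fun k => ?_
  refine (Finset.measurable_sum _ fun i _ => ?_).div_const _
  exact (measurable_of_countable fun p : X × X => r p.1 p.2).comp
    ((measurable_pi_apply (X := fun _ : ℕ => X) i).prodMk
      (measurable_pi_apply (X := fun _ : ℕ => X) (i + 1)))

/-- Let `π` be a memoryless strategy of the homing product
`M ⊗↻_λ H` such that from every state, almost every trajectory of the
induced Markov chain has mean payoff (existing as a limit of Cesàro
averages) equal to `v`. Lift `π` to the monitored homing product
`M ⊗↻_λ R,H` (arbitrarily at `CE`). Then, started at the initial state,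
almost every trajectory of the induced chain either eventually visits `CE`
or has mean payoff of the rewards collected from `R` equal to `v`. -/
theorem lifted_strategy_meanPayoff_or_CE
    [Fintype S] [Fintype A] [Fintype UR] [Fintype UH] [Fintype Z]
    (M : NRMDP S A) (null : Z) (lab : A → S → Z)
    (R : MRM UR Z null) (H : MRM UH Z null) (creset v : ℝ)
    (π : S × UH → A ⊕ Unit)
    (hπ : ∀ x : S × UH, ∀ μ : MeasureTheory.Measure (ℕ → S × UH),
      IsChainMeasure (fun p q => homT M.T lab H.δu M.s0 H.u0 p (π p) q) x μ →
      ∀ᵐ ω ∂μ, Filter.Tendsto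
        (fun k : ℕ => (∑ i ∈ Finset.range k, homRew lab H creset π (ω i) (ω (i + 1))) / k)
        Filter.atTop (nhds v))
    (πhat : Option (S × UR × UH) → A ⊕ Unit)
    (hπhat : ∀ (s : S) (uR : UR) (uH : UH), πhat (some (s, uR, uH)) = π (s, uH)) :
    ∀ μ : MeasureTheory.Measure (ℕ → Option (S × UR × UH)),
      IsChainMeasure (fun p q => monT M.T lab R H M.s0 p (πhat p) q)
        (some ((M.s0 : S), (R.u0 : UR), (H.u0 : UH))) μ →
      ∀ᵐ ω ∂μ, (∃ n : ℕ, ω n = none) ∨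
        Filter.Tendsto
          (fun k : ℕ => (∑ i ∈ Finset.range k, monRew lab R creset πhat (ω i) (ω (i + 1))) / k)
          Filter.atTop (nhds v) := by
  intro μ hμ
  obtain ⟨m, hm⟩ := exists_noise M
  have hhom := isChainMeasure_map_orbit m (homStep lab H.δu M.s0 H.u0 π)
    (fun p q => homT M.T lab H.δu M.s0 H.u0 p (π p) q) (fun x y => homT_nonneg ..)
    (homStep_law M m hm lab H.δu H.u0 π) (M.s0, H.u0)
  have hmon := isChainMeasure_map_orbit m (monStep lab R H M.s0 π)
    (fun p q => monT M.T lab R H M.s0 p (πhat p) q) (fun x y => monT_nonneg ..)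
    (monStep_law M m hm lab R H π πhat hπhat) (some (M.s0, R.u0, H.u0))
  rw [hμ.unique hmon]
  have hset : MeasurableSet {ω : ℕ → Option (S × UR × UH) | (∃ n : ℕ, ω n = none) ∨
      Tendsto (fun k : ℕ =>
        (∑ i ∈ Finset.range k, monRew lab R creset πhat (ω i) (ω (i + 1))) / k)
        atTop (nhds v)} := by
    refine MeasurableSet.union ?_ (measurableSet_meanPayoff _ v)
    have e : {ω : ℕ → Option (S × UR × UH) | ∃ n : ℕ, ω n = none} =
        ⋃ n, {ω | ω n ∈ ({none} : Set (Option (S × UR × UH)))} := by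
      ext ω; simp
    exact MeasurableSet.congr (MeasurableSet.iUnion fun n => measurable_eval_top _ n _) e.symm
  rw [ae_map_iff (measurable_orbit _ _).aemeasurable hset]
  filter_upwards [ae_of_ae_map (measurable_orbit _ _).aemeasurable (hπ _ _ hhom)] with ω hω
  by_cases hne : ∃ n, orbit (monStep lab R H M.s0 π) (some (M.s0, R.u0, H.u0)) ω n = none
  · exact Or.inl hne
  · push Not at hne
    right
    simpa only [monRew_orbit lab R H M.s0 creset π πhat hπhat ω hne] using hω
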